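/- Let β : ℝ → ℝ be nondecreasing with β(0) = 0, and let m ≥ 0 and δ > 0. Then there exists a constant C ≥ 0 such that for all r, r₀ ∈ ℝ with |r₀| ≤ m one has β(r)·(r − r₀) ≥ δ·|β(r)| − C. (One may take C = (2m + 2δ)·max(|β(m+δ)|, |β(−m−δ)|).) -/

import Mathlib

/-!
Since `β r` has the sign of `r`, we have `β r * (r - r₀) ≥ |β r| * (|r| - m)`, so it suffices to
bound `|β r| * (m + δ - |r|)` from above. This quantity is nonpositive for `|r| ≥ m + δ`, and on
`[-(m + δ), m + δ]` it is at most `m + δ` times a bound for `|β|` there; for monotone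
`β` such a bound can be read off at the two endpoints.
-/

lemma abs_apply_le_max_of_monotone {G H : Type*} [AddCommGroup G] [LinearOrder G]
    [IsOrderedAddMonoid G] [AddCommGroup H] [LinearOrder H] [IsOrderedAddMonoid H] {f : G → H}
    (hf : Monotone f) {x s : G} (hx : |x| ≤ s) : |f x| ≤ max |f (-s)| |f s| :=
  abs_le_max_abs_abs (hf (neg_le_of_abs_le hx)) (hf (le_of_abs_le hx))

section OrderedRing

variable {R : Type*} [Ring R] [LinearOrder R] [IsOrderedRing R] {f : R → R}

lemma apply_mul_self_nonneg_of_monotone (hf : Monotone f) (hf0 : f 0 = 0) (x : R) :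
    0 ≤ f x * x := by
  rcases le_total 0 x with hx | hx
  · exact mul_nonneg (hf0 ▸ hf hx) hx
  · exact mul_nonneg_of_nonpos_of_nonpos (hf0 ▸ hf hx) hx

lemma abs_mul_abs_sub_le_mul_sub {a x y m : R} (hax : 0 ≤ a * x) (hy : |y| ≤ m) :
    |a| * (|x| - m) ≤ a * (x - y) :=
  calc |a| * (|x| - m) ≤ |a| * (|x| - |y|) := by gcongr
    _ = a * x - |a * y| := by rw [mul_sub, ← abs_mul, ← abs_mul, abs_of_nonneg hax]
    _ ≤ a * x - a * y := by gcongr; exact le_abs_self _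
    _ = a * (x - y) := (mul_sub a x y).symm

lemma abs_apply_mul_sub_abs_le {s M : R} (hs : 0 ≤ s) (hM : ∀ x, |x| ≤ s → |f x| ≤ M) (x : R) :
    |f x| * (s - |x|) ≤ M * s := by
  have hM_nonneg : 0 ≤ M := (abs_nonneg (f 0)).trans (hM 0 (by rwa [abs_zero]))
  rcases le_total |x| s with hx | hx
  · exact mul_le_mul (hM x hx) (sub_le_self s (abs_nonneg x)) (sub_nonneg.2 hx) hM_nonneg
  · exact (mul_nonpos_of_nonneg_of_nonpos (abs_nonneg _) (sub_nonpos.2 hx)).trans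
      (mul_nonneg hM_nonneg hs)

end OrderedRing

theorem knp_inequality_general {R : Type*} [CommRing R] [LinearOrder R] [IsOrderedRing R]
    {β : R → R} (hβ_sign : ∀ r, 0 ≤ β r * r) {m δ M : R} (hs : 0 ≤ m + δ)
    (hM : ∀ r, |r| ≤ m + δ → |β r| ≤ M) (r : R) {r₀ : R} (hr₀ : |r₀| ≤ m) :
    δ * |β r| - M * (m + δ) ≤ β r * (r - r₀) :=
  calc δ * |β r| - M * (m + δ) ≤ δ * |β r| - |β r| * (m + δ - |r|) :=
        sub_le_sub_left (abs_apply_mul_sub_abs_le hs hM r) _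
    _ = |β r| * (|r| - m) := by ring
    _ ≤ β r * (r - r₀) := abs_mul_abs_sub_le_mul_sub (hβ_sign r) hr₀

/-- Kenmochi–Niezgódka–Pawłow type inequality: if `β : ℝ → ℝ` is nondecreasing with `β(0) = 0`,
`m ≥ 0` and `δ > 0`, then there is `C ≥ 0` such that for all `r, r₀` with `|r₀| ≤ m` one has
`β(r)·(r − r₀) ≥ δ·|β(r)| − C`. -/
theorem knp_inequality (β : ℝ → ℝ) (hβ : Monotone β) (hβ0 : β 0 = 0)
    (m δ : ℝ) (hm : 0 ≤ m) (hδ : 0 < δ) :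
    ∃ C : ℝ, 0 ≤ C ∧ ∀ r r₀ : ℝ, |r₀| ≤ m → β r * (r - r₀) ≥ δ * |β r| - C :=
  ⟨max |β (-(m + δ))| |β (m + δ)| * (m + δ), by positivity, fun r _ hr₀ ↦
    knp_inequality_general (apply_mul_self_nonneg_of_monotone hβ hβ0) (by positivity)
      (fun _ ↦ abs_apply_le_max_of_monotone hβ) r hr₀⟩
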